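/- Let K ⊂ ℝ³ be compact and δ > 0 be such that for every point (r₀, z) ∈ K one has η(q) = 1 for all q ∈ ℝ² with |q − r₀| ≤ 2δ. Then for every c₀ > 0 and every n ∈ ℕ there is a constant C = C(n, c₀, K, η) such that |Φ_k(r) − e^{ikz}| ≤ C (Re k)^{−n} for all r = (r₀, z) ∈ K and all k ∈ ℂ with Re k ≥ 1 and |Im k| ≤ c₀. -/

import Mathlib

open MeasureTheory Real Classical
open scoped RealInnerProductSpace

noncomputable section

abbrev E2 := EuclideanSpace ℝ (Fin 2)
abbrev E3 := EuclideanSpace ℝ (Fin 3)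

/-- The kernel `S_k(v) = sin(k|v|)/|v|`, with the removable singularity at `0` filled
in by the value `k`. -/
def Skern (k : ℂ) (v : E3) : ℂ :=
  if v = 0 then k else Complex.sin (k * ‖v‖) / (‖v‖ : ℂ)

/-- The embedding `q ↦ (q, 0)` of `ℝ²` into `ℝ³`. -/
def emb2 (q : E2) : E3 := (WithLp.equiv 2 (Fin 3 → ℝ)).symm ![q 0, q 1, 0]

/-- `p_k(r) = ∫_{ℝ²} η(q) S_k(r - (q,0)) dq`. -/
def pfun (η : E2 → ℝ) (k : ℂ) (r : E3) : ℂ :=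
  ∫ q : E2, (η q : ℂ) * Skern k (r - emb2 q)

/-- The projection of an `ℝ³` point onto its first two coordinates. -/
def proj32 (r : E3) : E2 := (WithLp.equiv 2 (Fin 2 → ℝ)).symm ![r 0, r 1]

/-- The partial derivative `∂p_k/∂z`, i.e. the derivative of `p_k` in the direction of the
third coordinate vector. -/
def pz (η : E2 → ℝ) (k : ℂ) (r : E3) : ℂ :=
  fderiv ℝ (pfun η k) r (EuclideanSpace.single 2 (1 : ℝ))

/-- `Φ_k(r) = (k/(2π)) p_k(r) - (i/(2π)) ∂p_k/∂z (r)`. -/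
def Phi (η : E2 → ℝ) (k : ℂ) (r : E3) : ℂ :=
  (k / (2 * π)) * pfun η k r - (Complex.I / (2 * π)) * pz η k r

open scoped ContDiff

/-- distance `√(ρ² + z²)` -/
def sdist (z ρ : ℝ) : ℝ := √(ρ ^ 2 + z ^ 2)

lemma sdist_pos (z : ℝ) {ρ : ℝ} (h : 0 < ρ) : 0 < sdist z ρ := by
  unfold sdist; positivity

lemma sdist_continuous : Continuous (fun p : ℝ × ℝ => sdist p.1 p.2) := by
  unfold sdist; fun_prop

lemma sdist_hasDerivAt (z : ℝ) {ρ : ℝ} (h : 0 < ρ) :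
    HasDerivAt (fun t => sdist z t) (ρ / sdist z ρ) ρ := by
  have h1 : HasDerivAt (fun t : ℝ => t ^ 2 + z ^ 2) (2 * ρ) ρ := by
    simpa using (hasDerivAt_pow 2 ρ).add_const (z ^ 2)
  have h2 := h1.sqrt (by positivity)
  rw [mul_div_mul_left _ _ two_ne_zero] at h2
  exact h2

lemma sdist_hasDerivAt_left (z : ℝ) {ρ : ℝ} (h : 0 < ρ) :
    HasDerivAt (fun t => sdist t ρ) (z / sdist z ρ) z := by
  have h1 : HasDerivAt (fun t : ℝ => ρ ^ 2 + t ^ 2) (2 * z) z := by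
    simpa using (hasDerivAt_pow 2 z).const_add (ρ ^ 2)
  have h2 := h1.sqrt (by positivity)
  rw [mul_div_mul_left _ _ two_ne_zero] at h2
  exact h2

abbrev XX := E3 × ℝ × ℝ

def UU : Set XX := {x | 0 < x.2.2}

lemma UU_open : IsOpen UU := isOpen_lt continuous_const (by fun_prop)

lemma sdist_smooth : ContDiffOn ℝ ∞ (fun x : XX => sdist (x.1 2) x.2.2) UU := by
  unfold sdist
  apply ContDiffOn.sqrt
  · have : ContDiff ℝ ∞ (fun x : XX => x.1 2) := by fun_prop
    fun_prop
  · intro x hx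
    have : 0 < x.2.2 := hx
    positivity

structure Amp (K : Set E3) (δ R : ℝ) (a : XX → ℂ) : Prop where
  smooth : ContDiffOn ℝ ∞ a UU
  low : ∀ r ∈ K, ∀ θ ρ, 0 < ρ → ρ < 2 * δ → a (r, θ, ρ) = 0
  high : ∀ r ∈ K, ∀ θ ρ, R < ρ → a (r, θ, ρ) = 0

def Wt (a : XX → ℂ) (y : XX) : ℂ := a y * ((sdist (y.1 2) y.2.2 / y.2.2 : ℝ) : ℂ)

def LL (a : XX → ℂ) (x : XX) : ℂ := fderiv ℝ (Wt a) x (0, 0, 1)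

lemma Wt_smooth {a : XX → ℂ} (h : ContDiffOn ℝ ∞ a UU) : ContDiffOn ℝ ∞ (Wt a) UU := by
  unfold Wt
  apply h.mul
  apply Complex.ofRealCLM.contDiff.comp_contDiffOn
  apply sdist_smooth.div (by fun_prop)
  intro x hx
  exact (ne_of_gt hx)

lemma LL_hasDerivAt {a : XX → ℂ} (h : ContDiffOn ℝ ∞ a UU) (r : E3) (θ : ℝ) {ρ : ℝ} (hρ : 0 < ρ) :
    HasDerivAt (fun t => Wt a (r, θ, t)) (LL a (r, θ, ρ)) ρ := by
  have h1 : DifferentiableAt ℝ (Wt a) (r, θ, ρ) :=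
    ((Wt_smooth h).contDiffAt (UU_open.mem_nhds hρ)).differentiableAt (by simp)
  have h2 : HasDerivAt (fun t : ℝ => ((r, θ, t) : XX)) (0, 0, 1) ρ :=
    (hasDerivAt_const _ _).prodMk ((hasDerivAt_const _ _).prodMk (hasDerivAt_id _))
  exact h1.hasFDerivAt.comp_hasDerivAt ρ h2

lemma LL_amp {K : Set E3} {δ R : ℝ} {a : XX → ℂ} (hR : 0 < R) (h : Amp K δ R a) :
    Amp K δ R (LL a) := by
  refine ⟨?_, ?_, ?_⟩
  · have := (Wt_smooth h.smooth).fderiv_of_isOpen (m := ∞) UU_open (by simp)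
    exact this.clm_apply contDiffOn_const
  · intro r hr θ ρ h0 h1
    refine (LL_hasDerivAt h.smooth r θ h0).unique ?_
    refine (hasDerivAt_const ρ (0:ℂ)).congr_of_eventuallyEq ?_
    filter_upwards [Ioo_mem_nhds h0 h1] with t ht
    simp [Wt, h.low r hr θ t ht.1 ht.2]
  · intro r hr θ ρ h1
    refine (LL_hasDerivAt h.smooth r θ (hR.trans h1)).unique ?_
    refine (hasDerivAt_const ρ (0:ℂ)).congr_of_eventuallyEq ?_
    filter_upwards [Ioi_mem_nhds h1] with t ht
    simp [Wt, h.high r hr θ t ht]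

def osc (w : ℂ) (z ρ : ℝ) : ℂ := Complex.exp (w * (sdist z ρ : ℂ))

lemma osc_continuous (w : ℂ) (z : ℝ) : Continuous (osc w z) := by
  unfold osc sdist; fun_prop

lemma osc_hasDerivAt (w : ℂ) (z : ℝ) {ρ : ℝ} (hρ : 0 < ρ) :
    HasDerivAt (osc w z) (osc w z ρ * (w * ((ρ / sdist z ρ : ℝ) : ℂ))) ρ := by
  exact (((sdist_hasDerivAt z hρ).ofReal_comp).const_mul w).cexp

lemma slice_cont {a : XX → ℂ} (h : ContDiffOn ℝ ∞ a UU) (r : E3) (θ : ℝ) {δ R : ℝ} (hδ : 0 < δ) :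
    ContinuousOn (fun ρ => a (r, θ, ρ)) (Set.Icc δ R) :=
  h.continuousOn.comp (by fun_prop) (fun ρ hρ => lt_of_lt_of_le hδ hρ.1)

lemma ibp_step {K : Set E3} {δ R : ℝ} {a : XX → ℂ} (hδ : 0 < δ) (hR : δ < R) (h : Amp K δ R a)
    (r : E3) (hr : r ∈ K) (θ : ℝ) (w : ℂ) (hw : w ≠ 0) :
    ∫ ρ in δ..(R + 1), a (r, θ, ρ) * osc w (r 2) ρ =
      -(1 / w) * ∫ ρ in δ..(R + 1), LL a (r, θ, ρ) * osc w (r 2) ρ := by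
  have hle : δ ≤ R + 1 := by linarith
  have hu : Set.uIcc δ (R + 1) = Set.Icc δ (R + 1) := Set.uIcc_of_le hle
  have hA := LL_amp (hδ.trans hR) h
  have hd1 := fun ρ (hρ : 0 < ρ) => LL_hasDerivAt h.smooth r θ hρ
  have key := intervalIntegral.integral_deriv_mul_eq_sub (a := δ) (b := R + 1)
    (u := fun ρ => Wt a (r, θ, ρ)) (u' := fun ρ => LL a (r, θ, ρ))
    (v := osc w (r 2)) (v' := fun ρ => osc w (r 2) ρ * (w * ((ρ / sdist (r 2) ρ : ℝ) : ℂ)))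
    (fun ρ hρ => hd1 ρ (by rw [hu] at hρ; exact hδ.trans_le hρ.1))
    (fun ρ hρ => osc_hasDerivAt w _ (by rw [hu] at hρ; exact hδ.trans_le hρ.1))
    ((slice_cont hA.smooth r θ hδ).intervalIntegrable_of_Icc hle)
    (by
      apply ContinuousOn.intervalIntegrable_of_Icc hle
      apply (osc_continuous _ _).continuousOn.mul
      apply continuousOn_const.mul
      apply Complex.continuous_ofReal.comp_continuousOn
      apply continuousOn_id.div
      · unfold sdist; fun_prop
      · intro x hx
        exact (sdist_pos _ (hδ.trans_le hx.1)).ne')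
  have e1 : Wt a (r, θ, δ) = 0 := by simp [Wt, h.low r hr θ δ hδ (by linarith)]
  have e2 : Wt a (r, θ, R + 1) = 0 := by simp [Wt, h.high r hr θ (R + 1) (by linarith)]
  have e3 : ∀ ρ ∈ Set.uIcc δ (R + 1), (LL a (r, θ, ρ) * osc w (r 2) ρ +
      Wt a (r, θ, ρ) * (osc w (r 2) ρ * (w * ((ρ / sdist (r 2) ρ : ℝ) : ℂ)))) =
      LL a (r, θ, ρ) * osc w (r 2) ρ + w * (a (r, θ, ρ) * osc w (r 2) ρ) := by
    intro ρ hρ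
    rw [hu] at hρ
    have h0 : (0:ℝ) < ρ := hδ.trans_le hρ.1
    have h0' : (ρ : ℂ) ≠ 0 := by exact_mod_cast h0.ne'
    have h1' : (sdist (r 2) ρ : ℂ) ≠ 0 := by exact_mod_cast (sdist_pos (r 2) h0).ne'
    simp only [Wt, Complex.ofReal_div]
    field_simp
  rw [intervalIntegral.integral_congr e3, e1, e2, intervalIntegral.integral_add,
    intervalIntegral.integral_const_mul] at key
  · field_simp
    linear_combination key
  · exact (((slice_cont hA.smooth r θ hδ).mul
      (osc_continuous _ _).continuousOn)).intervalIntegrable_of_Icc hle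
  · exact (((slice_cont h.smooth r θ hδ).mul
      (osc_continuous _ _).continuousOn).const_mul w).intervalIntegrable_of_Icc hle

lemma osc_bound {K : Set E3} (hK : IsCompact K) (R c : ℝ) : ∃ B : ℝ, 0 ≤ B ∧ ∀ r ∈ K,
    ∀ ρ, 0 ≤ ρ → ρ ≤ R → ∀ w : ℂ, |w.re| ≤ c → ‖osc w (r 2) ρ‖ ≤ B := by
  obtain ⟨M, hM⟩ := (hK.prod (isCompact_Icc (a := (0:ℝ)) (b := R))).exists_bound_of_continuousOn
    (f := fun x : E3 × ℝ => sdist (x.1 2) x.2) (by unfold sdist; fun_prop)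
  refine ⟨Real.exp (|c| * |M|), (Real.exp_pos _).le, ?_⟩
  intro r hr ρ h0 h1 w hw
  have := hM (r, ρ) ⟨hr, h0, h1⟩
  rw [osc, Complex.norm_exp]
  apply Real.exp_le_exp.mpr
  simp only [Complex.mul_re, Complex.ofReal_re, Complex.ofReal_im, mul_zero, sub_zero]
  calc w.re * sdist (r 2) ρ ≤ |w.re * sdist (r 2) ρ| := le_abs_self _
    _ = |w.re| * |sdist (r 2) ρ| := abs_mul _ _
    _ ≤ |c| * |M| :=
      mul_le_mul (hw.trans (le_abs_self _)) (this.trans (le_abs_self _)) (abs_nonneg _)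
        (abs_nonneg _)

lemma amp_bound {K : Set E3} (hK : IsCompact K) {δ R : ℝ} (hδ : 0 < δ) (hR : δ < R) (c : ℝ) (n : ℕ) :
    ∀ a : XX → ℂ, Amp K δ R a → ∃ C : ℝ, 0 ≤ C ∧ ∀ r ∈ K, ∀ θ ∈ Set.Icc (-π) π, ∀ w : ℂ, w ≠ 0 →
      |w.re| ≤ c →
      ‖∫ ρ in δ..(R + 1), a (r, θ, ρ) * osc w (r 2) ρ‖ ≤ C / ‖w‖ ^ n := by
  induction n with
  | zero =>
    intro a ha
    obtain ⟨B, hB0, hB⟩ := osc_bound hK (R + 1) c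
    obtain ⟨M, hM⟩ := (hK.prod ((isCompact_Icc (a := -π) (b := π)).prod
      (isCompact_Icc (a := δ) (b := R + 1)))).exists_bound_of_continuousOn
      (f := a) (ha.smooth.continuousOn.mono (fun x hx => hδ.trans_le hx.2.2.1))
    refine ⟨|M| * B * |R + 1 - δ|, by positivity, ?_⟩
    intro r hr θ hθ w hw hwc
    simp only [pow_zero, div_one]
    apply intervalIntegral.norm_integral_le_of_norm_le_const
    intro ρ hρ
    rw [Set.uIoc_of_le (by linarith)] at hρ
    rw [norm_mul]
    gcongr
    · exact (hM (r, θ, ρ) ⟨hr, hθ, hρ.1.le, hρ.2⟩).trans (le_abs_self _)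
    · exact hB r hr ρ (hδ.trans hρ.1).le hρ.2 w hwc
  | succ n ih =>
    intro a ha
    obtain ⟨C, hC0, hC⟩ := ih (LL a) (LL_amp (hδ.trans hR) ha)
    refine ⟨C, hC0, ?_⟩
    intro r hr θ hθ w hw hwc
    rw [ibp_step hδ hR ha r hr θ w hw, norm_mul]
    have := hC r hr θ hθ w hw hwc
    have hw' : 0 < ‖w‖ := norm_pos_iff.mpr hw
    calc _ ≤ ‖-(1/w)‖ * (C / ‖w‖ ^ n) := by gcongr
      _ = C / ‖w‖ ^ (n+1) := by
        rw [norm_neg, norm_div, norm_one, pow_succ]; field_simp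

/-- the entire function behind `Skern` -/
def Sc (k : ℂ) (s : ℂ) : ℂ := k * dslope Complex.sin 0 (k * s)

lemma Sc_differentiable (k : ℂ) : Differentiable ℂ (Sc k) := by
  have h : Differentiable ℂ (dslope Complex.sin 0) := by
    rw [← differentiableOn_univ, Complex.differentiableOn_dslope Filter.univ_mem]
    exact Complex.differentiable_sin.differentiableOn
  unfold Sc
  fun_prop

lemma Sc_mul (k s : ℂ) : s * Sc k s = Complex.sin (k * s) := by
  have := sub_smul_dslope Complex.sin 0 (k * s)
  simp only [sub_zero, Complex.sin_zero, smul_eq_mul] at this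
  rw [← this, Sc]; ring

lemma Skern_eq (k : ℂ) (v : E3) : Skern k v = Sc k (‖v‖ : ℂ) := by
  unfold Skern
  split_ifs with h
  · simp [h, Sc]
  · have h' : (‖v‖ : ℂ) ≠ 0 := by simpa using h
    rw [← Sc_mul]; field_simp

def om (θ : ℝ) : E2 := !₂[Real.cos θ, Real.sin θ]

lemma norm_om (θ : ℝ) : ‖om θ‖ = 1 := by
  simp [om, EuclideanSpace.norm_eq, Fin.sum_univ_two]

lemma om_smooth : ContDiff ℝ ∞ om := by
  unfold om
  rw [contDiff_euclidean]
  intro i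
  fin_cases i
  · simpa using Real.contDiff_cos
  · simpa using Real.contDiff_sin

lemma proj32_smooth : ContDiff ℝ ∞ proj32 := by
  unfold proj32
  rw [contDiff_euclidean]
  intro i
  fin_cases i
  · simp; fun_prop
  · simp; fun_prop

lemma norm_sub_emb (r : E3) (θ ρ : ℝ) : ‖r - emb2 (proj32 r + ρ • om θ)‖ = sdist (r 2) ρ := by
  simp only [EuclideanSpace.norm_eq, Fin.sum_univ_three, sdist, emb2, proj32, om]
  congr 1
  simp [mul_pow]
  have := Real.sin_sq_add_cos_sq θ
  linear_combination ρ ^ 2 * this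

def hh (η : E2 → ℝ) (x : XX) : ℝ := fderiv ℝ η (proj32 x.1 + x.2.2 • om x.2.1) (om x.2.1)

lemma hh_smooth {η : E2 → ℝ} (hη : ContDiff ℝ ∞ η) : ContDiff ℝ ∞ (hh η) := by
  have h1 := om_smooth
  have h2 := proj32_smooth
  have h3 : ContDiff ℝ ∞ (fderiv ℝ η) := hη.fderiv_right (by simp)
  unfold hh
  apply ContDiff.clm_apply
  · apply h3.comp
    fun_prop
  · fun_prop

lemma hh_hasDerivAt {η : E2 → ℝ} (hη : ContDiff ℝ ∞ η) (r : E3) (θ ρ : ℝ) :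
    HasDerivAt (fun t => η (proj32 r + t • om θ)) (hh η (r, θ, ρ)) ρ := by
  have h1 : HasFDerivAt η _ (proj32 r + ρ • om θ) :=
    (hη.differentiable (by simp) _).hasFDerivAt
  have h2 : HasDerivAt (fun t : ℝ => proj32 r + t • om θ) (om θ) ρ := by
    simpa using ((hasDerivAt_id ρ).smul_const (om θ)).const_add (proj32 r)
  exact h1.comp_hasDerivAt ρ h2

lemma hh_low {η : E2 → ℝ} (hη : ContDiff ℝ ∞ η) {r : E3} {δ : ℝ}
    (h : ∀ q : E2, ‖q - proj32 r‖ ≤ 2 * δ → η q = 1) (θ : ℝ) {ρ : ℝ} (h0 : 0 < ρ)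
    (h1 : ρ < 2 * δ) : hh η (r, θ, ρ) = 0 := by
  refine (hh_hasDerivAt hη r θ ρ).unique ?_
  refine (hasDerivAt_const ρ (1:ℝ)).congr_of_eventuallyEq ?_
  filter_upwards [Ioo_mem_nhds h0 h1] with t ht
  apply h
  simp [norm_smul, norm_om, abs_of_pos ht.1, ht.2.le]

lemma hh_high {η : E2 → ℝ} (hη : ContDiff ℝ ∞ η) {r : E3} {R : ℝ}
    (h : ∀ θ ρ, R < ρ → η (proj32 r + ρ • om θ) = 0) (θ : ℝ) {ρ : ℝ} (h0 : R < ρ) :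
    hh η (r, θ, ρ) = 0 := by
  refine (hh_hasDerivAt hη r θ ρ).unique ?_
  refine (hasDerivAt_const ρ (0:ℝ)).congr_of_eventuallyEq ?_
  filter_upwards [Ioi_mem_nhds h0] with t ht
  exact h θ t ht

lemma integral_polar (f : E2 → ℂ) (c : E2) :
    ∫ q, f q = ∫ p in Set.Ioi (0:ℝ) ×ˢ Set.Ioo (-π) π, p.1 • f (c + p.1 • om p.2) := by
  have h1 : ∫ q, f q = ∫ q, f (c + q) := (integral_add_left_eq_self f c).symm
  have h2 := (PiLp.volume_preserving_toLp (Fin 2)).integral_comp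
    (MeasurableEquiv.toLp 2 (Fin 2 → ℝ)).measurableEmbedding (fun q => f (c + q))
  have h3 := (volume_preserving_finTwoArrow ℝ).symm.integral_comp
    (MeasurableEquiv.measurableEmbedding _) (fun q : Fin 2 → ℝ => f (c + WithLp.toLp 2 q))
  rw [h1, ← h2, ← h3, ← integral_comp_polarCoord_symm, polarCoord_target]
  congr 1
  ext p
  congr 3
  ext i
  fin_cases i <;> simp [polarCoord, om, MeasurableEquiv.finTwoArrow]

lemma inner_formula {η : E2 → ℝ} (hη : ContDiff ℝ ∞ η) {r : E3} {δ R : ℝ} (hδ : 0 < δ) (hR : δ < R)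
    (h1 : ∀ q : E2, ‖q - proj32 r‖ ≤ 2 * δ → η q = 1)
    (h2 : ∀ θ ρ, R < ρ → η (proj32 r + ρ • om θ) = 0) (k : ℂ) (hk : k ≠ 0) (θ : ℝ) :
    k * ∫ ρ in (0:ℝ)..(R + 1), (η (proj32 r + ρ • om θ) : ℂ) * (ρ * Sc k (sdist (r 2) ρ)) =
      Complex.cos (k * r 2) +
        ∫ ρ in δ..(R + 1), (hh η (r, θ, ρ) : ℂ) * Complex.cos (k * sdist (r 2) ρ) := by
  have hle : 0 ≤ R + 1 := by linarith
  have cs : Continuous (fun ρ : ℝ => sdist (r 2) ρ) := by unfold sdist; fun_prop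
  have ch : Continuous (fun ρ : ℝ => hh η (r, θ, ρ)) :=
    (hh_smooth hη).continuous.comp (by fun_prop)
  have ce := hη.continuous
  have cS := (Sc_differentiable k).continuous
  have key := intervalIntegral.integral_mul_deriv_eq_deriv_mul_of_hasDeriv_right
    (a := 0) (b := R + 1)
    (u := fun ρ : ℝ => (η (proj32 r + ρ • om θ) : ℂ)) (u' := fun ρ => (hh η (r, θ, ρ) : ℂ))
    (v := fun ρ : ℝ => - (Complex.cos (k * sdist (r 2) ρ) / k))
    (v' := fun ρ => (ρ * Sc k (sdist (r 2) ρ)))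
    (by fun_prop) (by fun_prop)
    (fun ρ hρ => ((hh_hasDerivAt hη r θ ρ).ofReal_comp).hasDerivWithinAt)
    (fun ρ hρ => by
      have h0 : 0 < ρ := by
        have := hρ.1
        rwa [min_eq_left hle] at this
      have hs := sdist_pos (r 2) h0
      have := (((Complex.hasDerivAt_cos (k * sdist (r 2) ρ)).comp ρ
        (((sdist_hasDerivAt (r 2) h0).ofReal_comp).const_mul k)).div_const k).neg
      refine (this.congr_deriv ?_).hasDerivWithinAt
      rw [← Sc_mul]
      have : (sdist (r 2) ρ : ℂ) ≠ 0 := by exact_mod_cast hs.ne'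
      push_cast
      field_simp)
    (Continuous.intervalIntegrable (by fun_prop) _ _)
    (Continuous.intervalIntegrable (by fun_prop) _ _)
  rw [key]
  have e1 : η (proj32 r + (R + 1) • om θ) = 0 := h2 _ _ (by linarith)
  have e2 : η (proj32 r + (0:ℝ) • om θ) = 1 := h1 _ (by simp; positivity)
  have e3 : Complex.cos (k * sdist (r 2) 0) = Complex.cos (k * r 2) := by
    have : sdist (r 2) 0 = |r 2| := by simp [sdist, Real.sqrt_sq_eq_abs]
    rw [this]
    rcases abs_choice (r 2) with h | h <;> simp [h]
  have ci : ∀ a b, IntervalIntegrable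
      (fun ρ : ℝ => (hh η (r, θ, ρ) : ℂ) * Complex.cos (k * sdist (r 2) ρ)) volume a b :=
    fun a b => Continuous.intervalIntegrable (by fun_prop) _ _
  have e4 : ∫ ρ in (0:ℝ)..δ, (hh η (r, θ, ρ) : ℂ) * Complex.cos (k * sdist (r 2) ρ) = 0 := by
    apply intervalIntegral.integral_zero_ae
    filter_upwards with ρ hρ
    rw [Set.uIoc_of_le hδ.le] at hρ
    rw [hh_low hη h1 θ hρ.1 (by linarith [hρ.2])]
    simp
  have e5 := intervalIntegral.integral_add_adjacent_intervals (ci 0 δ) (ci δ (R + 1))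
  rw [e4, zero_add] at e5
  rw [e5, e1, e2, e3]
  have e6 : ∀ ρ : ℝ, (hh η (r, θ, ρ) : ℂ) * -(Complex.cos (k * sdist (r 2) ρ) / k) =
      (-(1 / k)) * ((hh η (r, θ, ρ) : ℂ) * Complex.cos (k * sdist (r 2) ρ)) := by
    intro ρ; ring
  simp_rw [e6]
  rw [intervalIntegral.integral_const_mul]
  push_cast
  field_simp
  ring

lemma kp_formula {η : E2 → ℝ} (hη : ContDiff ℝ ∞ η) {r : E3} {δ R : ℝ} (hδ : 0 < δ) (hR : δ < R)
    (h1 : ∀ q : E2, ‖q - proj32 r‖ ≤ 2 * δ → η q = 1)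
    (h2 : ∀ θ ρ, R < ρ → η (proj32 r + ρ • om θ) = 0) (k : ℂ) (hk : k ≠ 0) :
    k * pfun η k r = 2 * π * Complex.cos (k * r 2) +
        ∫ x in Set.Icc (-π) π ×ˢ Set.Icc δ (R + 1),
          (hh η (r, x.1, x.2) : ℂ) * Complex.cos (k * sdist (r 2) x.2) := by
  have hle : 0 ≤ R + 1 := by linarith
  have cs : Continuous (fun ρ : ℝ => sdist (r 2) ρ) := by unfold sdist; fun_prop
  have ch := (hh_smooth hη).continuous
  have ce := hη.continuous
  have co := om_smooth.continuous
  have cS := (Sc_differentiable k).continuous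
  have hpi : -π ≤ π := by linarith [Real.pi_pos]
  unfold pfun
  rw [integral_polar _ (proj32 r)]
  simp_rw [Skern_eq, norm_sub_emb]
  have s1 : ∫ p in Set.Ioi (0:ℝ) ×ˢ Set.Ioo (-π) π, p.1 • ((η (proj32 r + p.1 • om p.2) : ℂ) *
      Sc k (sdist (r 2) p.1)) = ∫ p in Set.Ioc (0:ℝ) (R + 1) ×ˢ Set.Ioo (-π) π,
      p.1 • ((η (proj32 r + p.1 • om p.2) : ℂ) * Sc k (sdist (r 2) p.1)) := by
    apply setIntegral_eq_of_subset_of_forall_sdiff_eq_zero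
    · exact measurableSet_Ioi.prod measurableSet_Ioo
    · exact Set.prod_mono Set.Ioc_subset_Ioi_self le_rfl
    · rintro ⟨ρ, θ⟩ ⟨⟨ha, hb⟩, hc⟩
      have : R < ρ := by
        by_contra hcon
        exact hc ⟨⟨ha, by simp at hcon ⊢; linarith⟩, hb⟩
      simp [h2 θ ρ this]
  rw [s1]
  have s2 := setIntegral_prod_swap (μ := (volume : Measure ℝ)) (ν := (volume : Measure ℝ))
    (Set.Ioc (0:ℝ) (R + 1)) (Set.Ioo (-π) π)
    (fun p => p.1 • ((η (proj32 r + p.1 • om p.2) : ℂ) * Sc k (sdist (r 2) p.1)))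
  rw [Measure.volume_eq_prod, ← s2, setIntegral_prod]
  rotate_left
  · refine IntegrableOn.mono_set (t := Set.Icc (-π) π ×ˢ Set.Icc 0 (R + 1)) ?_
      (Set.prod_mono Set.Ioo_subset_Icc_self Set.Ioc_subset_Icc_self)
    apply ContinuousOn.integrableOn_compact (isCompact_Icc.prod isCompact_Icc)
    apply Continuous.continuousOn
    simp only [Prod.fst_swap, Prod.snd_swap]
    fun_prop
  rw [setIntegral_prod]
  rotate_left
  · apply ContinuousOn.integrableOn_compact (isCompact_Icc.prod isCompact_Icc)
    apply Continuous.continuousOn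
    fun_prop
  have s3 : ∀ θ : ℝ, k * ∫ ρ in Set.Ioc (0:ℝ) (R + 1), (Prod.swap (θ, ρ)).1 •
      ((η (proj32 r + (Prod.swap (θ, ρ)).1 • om (Prod.swap (θ, ρ)).2) : ℂ) *
        Sc k (sdist (r 2) (Prod.swap (θ, ρ)).1)) = Complex.cos (k * r 2) +
        ∫ ρ in δ..(R + 1), (hh η (r, θ, ρ) : ℂ) * Complex.cos (k * sdist (r 2) ρ) := by
    intro θ
    rw [← inner_formula hη hδ hR h1 h2 k hk θ, intervalIntegral.integral_of_le hle]
    congr 2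
    ext ρ
    simp only [Prod.swap_prod_mk, Complex.real_smul]
    ring
  rw [← integral_const_mul]
  simp_rw [s3]
  have hI : Continuous (fun θ => ∫ ρ in δ..(R + 1),
      (hh η (r, θ, ρ) : ℂ) * Complex.cos (k * sdist (r 2) ρ)) := by
    apply intervalIntegral.continuous_parametric_intervalIntegral_of_continuous'
    simp only [Function.uncurry_def]
    fun_prop
  rw [← integral_Ioc_eq_integral_Ioo, ← intervalIntegral.integral_of_le hpi,
    intervalIntegral.integral_add (by simp) (hI.intervalIntegrable _ _),
    intervalIntegral.integral_const, integral_Icc_eq_integral_Ioc,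
    ← intervalIntegral.integral_of_le hpi]
  simp_rw [integral_Icc_eq_integral_Ioc, ← intervalIntegral.integral_of_le (show δ ≤ R + 1 by linarith)]
  congr 1
  rw [Complex.real_smul]
  push_cast
  ring

lemma emb2_continuous : Continuous emb2 := by
  unfold emb2
  refine (PiLp.continuous_toLp 2 _).comp (continuous_pi fun i => ?_)
  fin_cases i <;> simp <;> fun_prop

lemma emb2_injective : Function.Injective emb2 := by
  intro a b h
  have h0 := congrArg (fun v : E3 => v 0) h
  have h1 := congrArg (fun v : E3 => v 1) h
  simp [emb2] at h0 h1
  ext i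
  fin_cases i
  · exact h0
  · exact h1

lemma Skern_diff (k : ℂ) {v : E3} (hv : v ≠ 0) : DifferentiableAt ℝ (Skern k) v := by
  have h : Skern k = fun v => Sc k (‖v‖ : ℂ) := funext (Skern_eq k)
  rw [h]
  have h1 : DifferentiableAt ℝ (fun v : E3 => ‖v‖) v := (contDiffAt_norm ℝ hv).differentiableAt one_ne_zero
  have h2 : DifferentiableAt ℝ (Sc k) (‖v‖ : ℂ) := ((Sc_differentiable k) _).restrictScalars ℝ
  have h3 : DifferentiableAt ℝ (fun v : E3 => (‖v‖ : ℂ)) v :=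
    Complex.ofRealCLM.differentiableAt.comp v h1
  exact DifferentiableAt.comp (g := Sc k) (f := fun v : E3 => (‖v‖ : ℂ)) v h2 h3

lemma Skern_lip (k : ℂ) (M : ℝ) : ∃ L : ℝ, 0 ≤ L ∧ ∀ v w : E3, ‖v‖ ≤ M → ‖w‖ ≤ M →
    ‖Skern k v - Skern k w‖ ≤ L * ‖v - w‖ := by
  have hd := Sc_differentiable k
  have hc : Continuous (deriv (Sc k)) := (hd.contDiff (n := 1)).continuous_deriv le_rfl
  obtain ⟨L, hL⟩ := (isCompact_closedBall (0:ℂ) M).exists_bound_of_continuousOn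
    (f := deriv (Sc k)) hc.continuousOn
  refine ⟨|L|, abs_nonneg _, ?_⟩
  intro v w hv hw
  rw [Skern_eq, Skern_eq]
  have := (convex_closedBall (0:ℂ) M).norm_image_sub_le_of_norm_deriv_le (f := Sc k) (C := |L|)
    (x := (‖w‖ : ℂ)) (y := (‖v‖ : ℂ)) (fun x _ => hd x)
    (fun x hx => (hL x hx).trans (le_abs_self _)) (by simpa using hw) (by simpa using hv)
  refine this.trans ?_
  gcongr
  rw [← Complex.ofReal_sub, Complex.norm_real]
  exact abs_norm_sub_norm_le v w

lemma Skern_continuous (k : ℂ) : Continuous (Skern k) := by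
  have h : Skern k = fun v => Sc k (‖v‖ : ℂ) := funext (Skern_eq k)
  have := (Sc_differentiable k).continuous
  rw [h]; fun_prop

lemma pfun_diff {η : E2 → ℝ} (hη : Continuous η) (hs : HasCompactSupport η) (k : ℂ) (r : E3) :
    DifferentiableAt ℝ (pfun η k) r := by
  have cS := Skern_continuous k
  have ce := emb2_continuous
  obtain ⟨M, hM⟩ := hs.isCompact.exists_bound_of_continuousOn (f := emb2) ce.continuousOn
  obtain ⟨L, hL0, hL⟩ := Skern_lip k (‖r‖ + 1 + M)
  have hcs : HasCompactSupport (fun q => (η q : ℂ)) := hs.comp_left (g := fun x : ℝ => (x : ℂ)) (by simp)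
  have key := hasFDerivAt_integral_of_dominated_loc_of_lip' (𝕜 := ℝ) (μ := (volume : Measure E2))
    (F := fun r q => (η q : ℂ) * Skern k (r - emb2 q)) (x₀ := r)
    (F' := fun q => (η q : ℂ) • fderiv ℝ (Skern k) (r - emb2 q))
    (bound := fun q => ‖η q‖ * L)
    (s := Metric.ball r 1) (Metric.ball_mem_nhds r one_pos)
    (fun x _ => Continuous.aestronglyMeasurable (by fun_prop))
    (Continuous.integrable_of_hasCompactSupport (by fun_prop) hcs.mul_right)
    (by
      refine AEStronglyMeasurable.smul (f := fun q => (η q : ℂ))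
        (g := fun q => fderiv ℝ (Skern k) (r - emb2 q)) ?_ ?_
      · exact Continuous.aestronglyMeasurable (by fun_prop)
      · apply Measurable.aestronglyMeasurable
        exact (measurable_fderiv ℝ (Skern k)).comp (by fun_prop))
    (by
      filter_upwards with q x hx
      rw [← mul_sub, norm_mul, Complex.norm_real, mul_assoc]
      by_cases hq : q ∈ tsupport η
      · gcongr
        have h1 : ‖x‖ ≤ ‖r‖ + 1 := by
          have h1 : ‖x - r‖ < 1 := by simpa [dist_eq_norm] using hx
          have h2 : ‖x‖ ≤ ‖x - r‖ + ‖r‖ := by simpa using norm_add_le (x - r) r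
          linarith
        have h2 := hM q hq
        have := hL (x - emb2 q) (r - emb2 q) ((norm_sub_le _ _).trans (by linarith))
          ((norm_sub_le _ _).trans (by linarith))
        simpa using this
      · simp [image_eq_zero_of_notMem_tsupport hq])
    ((Continuous.integrable_of_hasCompactSupport (by fun_prop) hs.norm.mul_right))
    (by
      have hsub : Set.Subsingleton {q : E2 | r - emb2 q = 0} := by
        intro a ha b hb
        apply emb2_injective
        rw [← sub_eq_zero.mp ha, ← sub_eq_zero.mp hb]
      have h0 : (volume : Measure E2) {q : E2 | r - emb2 q = 0} = 0 := hsub.measure_zero _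
      have h0' : ∀ᵐ q : E2, r - emb2 q ≠ 0 := by
        rw [ae_iff]; simpa using h0
      filter_upwards [h0'] with q hq
      have h1 : HasFDerivAt (fun x : E3 => Skern k (x - emb2 q)) (fderiv ℝ (Skern k) (r - emb2 q)) r := by
        have := (Skern_diff k hq).hasFDerivAt.comp r ((hasFDerivAt_id r).sub_const (emb2 q))
        rw [ContinuousLinearMap.comp_id] at this
        exact this
      exact h1.const_mul _)
  exact key.2.differentiableAt

lemma dz_integral {η : E2 → ℝ} (hη : ContDiff ℝ ∞ η) (r : E3) {δ R : ℝ} (hδ : 0 < δ) 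
    (k : ℂ) (z : ℝ) :
    HasDerivAt (fun t : ℝ => ∫ x in Set.Icc (-π) π ×ˢ Set.Icc δ (R + 1),
          (hh η (r, x.1, x.2) : ℂ) * Complex.cos (k * sdist t x.2))
      (∫ x in Set.Icc (-π) π ×ˢ Set.Icc δ (R + 1),
          (hh η (r, x.1, x.2) : ℂ) * (-Complex.sin (k * sdist z x.2) *
            (k * ((z / sdist z x.2 : ℝ) : ℂ)))) z := by
  have ch := (hh_smooth hη).continuous
  have cs := sdist_continuous
  have hcomp : IsCompact (Set.Icc (-π) π ×ˢ Set.Icc δ (R + 1)) := isCompact_Icc.prod isCompact_Icc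
  have hmeas : MeasurableSet (Set.Icc (-π) π ×ˢ Set.Icc δ (R + 1)) :=
    measurableSet_Icc.prod measurableSet_Icc
  have cont : ContinuousOn (fun y : ℝ × (ℝ × ℝ) => (hh η (r, y.2.1, y.2.2) : ℂ) *
      (-Complex.sin (k * sdist y.1 y.2.2) * (k * ((y.1 / sdist y.1 y.2.2 : ℝ) : ℂ))))
      (Metric.closedBall z 1 ×ˢ (Set.Icc (-π) π ×ˢ Set.Icc δ (R + 1))) := by
    have c1 : Continuous (fun y : ℝ × (ℝ × ℝ) => sdist y.1 y.2.2) := by unfold sdist; fun_prop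
    have c2 : ContinuousOn (fun y : ℝ × (ℝ × ℝ) => y.1 / sdist y.1 y.2.2)
        (Metric.closedBall z 1 ×ˢ (Set.Icc (-π) π ×ˢ Set.Icc δ (R + 1))) := by
      apply continuousOn_fst.div c1.continuousOn
      rintro ⟨a, b, c⟩ ⟨_, _, h⟩
      exact (sdist_pos a (hδ.trans_le h.1)).ne'
    have c3 := Complex.continuous_ofReal.comp_continuousOn c2
    have c4 : Continuous (fun y : ℝ × (ℝ × ℝ) => (hh η (r, y.2.1, y.2.2) : ℂ)) := by fun_prop
    have c5 : Continuous (fun y : ℝ × (ℝ × ℝ) => -Complex.sin (k * sdist y.1 y.2.2)) := by fun_prop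
    exact c4.continuousOn.mul (c5.continuousOn.mul (continuousOn_const.mul c3))
  obtain ⟨M, hM⟩ := ((isCompact_closedBall z 1).prod hcomp).exists_bound_of_continuousOn cont
  have cz : ∀ t, Continuous (fun ρ => sdist t ρ) := by intro t; unfold sdist; fun_prop
  have cF : ∀ t : ℝ, Continuous (fun x : ℝ × ℝ =>
      (hh η (r, x.1, x.2) : ℂ) * Complex.cos (k * sdist t x.2)) := by
    intro t
    have := cz t
    fun_prop
  refine (hasDerivAt_integral_of_dominated_loc_of_deriv_le (𝕜 := ℝ)
    (μ := volume.restrict (Set.Icc (-π) π ×ˢ Set.Icc δ (R + 1)))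
    (F := fun t x => (hh η (r, x.1, x.2) : ℂ) * Complex.cos (k * sdist t x.2))
    (F' := fun t x => (hh η (r, x.1, x.2) : ℂ) *
      (-Complex.sin (k * sdist t x.2) * (k * ((t / sdist t x.2 : ℝ) : ℂ))))
    (bound := fun _ => M) (s := Metric.ball z 1) (Metric.ball_mem_nhds z one_pos)
    (Filter.Eventually.of_forall fun t => (cF t).aestronglyMeasurable)
    ((cF z).continuousOn.integrableOn_compact hcomp) ?_ ?_ ?_ ?_).2
  · apply ContinuousOn.aestronglyMeasurable _ hmeas
    exact cont.comp (f := fun x : ℝ × ℝ => (z, x)) (by fun_prop)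
      (fun x hx => ⟨by simp, hx⟩)
  · filter_upwards [ae_restrict_mem hmeas] with x hx t ht
    exact hM (t, x) ⟨Metric.ball_subset_closedBall ht, hx⟩
  · exact (continuousOn_const).integrableOn_compact hcomp
  · filter_upwards [ae_restrict_mem hmeas] with x hx t ht
    apply HasDerivAt.const_mul
    exact (Complex.hasDerivAt_cos (k * sdist t x.2)).comp t
      (((sdist_hasDerivAt_left t (hδ.trans_le hx.2.1)).ofReal_comp).const_mul k)

def ampP (η : E2 → ℝ) (σ : ℝ) (x : XX) : ℂ :=
  ((hh η x * (1 + σ * (x.1 2 / sdist (x.1 2) x.2.2)) : ℝ) : ℂ)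

lemma Phi_formula {η : E2 → ℝ} (hη : ContDiff ℝ ∞ η) (hs : HasCompactSupport η)
    {r : E3} {δ R : ℝ} (hδ : 0 < δ) (hR : δ < R)
    (h1 : ∀ q : E2, ‖q - proj32 r‖ ≤ 2 * δ → η q = 1)
    (h2 : ∀ θ ρ, R < ρ → η (proj32 r + ρ • om θ) = 0) (k : ℂ) (hk : k ≠ 0) :
    Phi η k r - Complex.exp (Complex.I * k * (r 2 : ℂ)) =
      1 / (4 * π) * ∫ x in Set.Icc (-π) π ×ˢ Set.Icc δ (R + 1),
        (ampP η 1 (r, x.1, x.2) * osc (Complex.I * k) (r 2) x.2 +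
         ampP η (-1) (r, x.1, x.2) * osc (-(Complex.I * k)) (r 2) x.2) := by
  set e : E3 := EuclideanSpace.single 2 (1 : ℝ) with he
  set D := Set.Icc (-π) π ×ˢ Set.Icc δ (R + 1) with hD
  have ez : ∀ t : ℝ, (r + t • e) 2 = r 2 + t := by intro t; simp [he]
  have ep : ∀ t : ℝ, proj32 (r + t • e) = proj32 r := by
    intro t; simp [he, proj32]
  have eh : ∀ (t θ ρ : ℝ), hh η (r + t • e, θ, ρ) = hh η (r, θ, ρ) := by
    intro t θ ρ; simp [hh, ep]
  have hline : ∀ t : ℝ, pfun η k (r + t • e) =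
      (2 * π * Complex.cos (k * (r 2 + t : ℝ)) +
        ∫ x in D, (hh η (r, x.1, x.2) : ℂ) * Complex.cos (k * sdist (r 2 + t) x.2)) / k := by
    intro t
    have := kp_formula hη (r := r + t • e) hδ hR (by rwa [ep]) (by rwa [ep]) k hk
    simp only [ez, eh] at this
    rw [← this]; field_simp
  have d1 : HasDerivAt (fun t : ℝ => pfun η k (r + t • e)) (pz η k r) 0 := by
    have hd := (pfun_diff hη.continuous hs k r).hasFDerivAt
    have hl : HasDerivAt (fun t : ℝ => r + t • e) e 0 := by
      simpa using ((hasDerivAt_id (0:ℝ)).smul_const e).const_add r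
    have hd' : HasFDerivAt (pfun η k) (fderiv ℝ (pfun η k) r) (r + (0:ℝ) • e) := by simpa using hd
    exact hd'.comp_hasDerivAt (0:ℝ) hl
  have hadd : HasDerivAt (fun t : ℝ => r 2 + t) 1 0 := (hasDerivAt_id (0:ℝ)).const_add (r 2)
  have d2 : HasDerivAt (fun t : ℝ => (2 * π * Complex.cos (k * (r 2 + t : ℝ)) +
        ∫ x in D, (hh η (r, x.1, x.2) : ℂ) * Complex.cos (k * sdist (r 2 + t) x.2)) / k)
      ((2 * π * (-Complex.sin (k * r 2) * k) + ∫ x in D, (hh η (r, x.1, x.2) : ℂ) *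
        (-Complex.sin (k * sdist (r 2) x.2) * (k * ((r 2 / sdist (r 2) x.2 : ℝ) : ℂ)))) / k) 0 := by
    apply HasDerivAt.div_const
    apply HasDerivAt.add
    · apply HasDerivAt.const_mul
      have := (Complex.hasDerivAt_cos (k * (r 2 + 0 : ℝ))).comp (0:ℝ) ((hadd.ofReal_comp).const_mul k)
      simpa [Function.comp_def] using this
    · have hz := dz_integral hη r (R := R) hδ k (r 2 + 0)
      have := hz.scomp (0:ℝ) hadd
      rw [one_smul, add_zero] at this
      exact this
  have d3 := d1.unique (d2.congr_of_eventuallyEq (Filter.Eventually.of_forall hline))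
  have hp := hline 0
  simp only [zero_smul, add_zero] at hp
  have cs : Continuous (fun ρ : ℝ => sdist (r 2) ρ) := by unfold sdist; fun_prop
  have ch := (hh_smooth hη).continuous
  have hcomp : IsCompact D := isCompact_Icc.prod isCompact_Icc
  have hmeas : MeasurableSet D := measurableSet_Icc.prod measurableSet_Icc
  have i1 : IntegrableOn (fun x : ℝ × ℝ => (hh η (r, x.1, x.2) : ℂ) *
      Complex.cos (k * sdist (r 2) x.2)) D := by
    apply ContinuousOn.integrableOn_compact hcomp
    apply Continuous.continuousOn
    fun_prop
  have i2 : IntegrableOn (fun x : ℝ × ℝ => (hh η (r, x.1, x.2) : ℂ) *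
        (-Complex.sin (k * sdist (r 2) x.2) * (k * ((r 2 / sdist (r 2) x.2 : ℝ) : ℂ)))) D := by
    apply ContinuousOn.integrableOn_compact hcomp
    have c2 : ContinuousOn (fun y : ℝ × ℝ => r 2 / sdist (r 2) y.2) D := by
      apply continuousOn_const.div (by fun_prop)
      rintro ⟨b, c⟩ ⟨_, h⟩
      exact (sdist_pos _ (hδ.trans_le h.1)).ne'
    have c3 := Complex.continuous_ofReal.comp_continuousOn c2
    have c4 : Continuous (fun y : ℝ × ℝ => (hh η (r, y.1, y.2) : ℂ)) := by fun_prop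
    have c5 : Continuous (fun y : ℝ × ℝ => -Complex.sin (k * sdist (r 2) y.2)) := by fun_prop
    exact c4.continuousOn.mul (c5.continuousOn.mul (continuousOn_const.mul c3))
  have hpi : (π : ℂ) ≠ 0 := by exact_mod_cast Real.pi_ne_zero
  have hsum : ∫ x in D,
        (ampP η 1 (r, x.1, x.2) * osc (Complex.I * k) (r 2) x.2 +
         ampP η (-1) (r, x.1, x.2) * osc (-(Complex.I * k)) (r 2) x.2) =
      2 * (∫ x in D, (hh η (r, x.1, x.2) : ℂ) * Complex.cos (k * sdist (r 2) x.2)) +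
      (-2 * Complex.I / k) * ∫ x in D, (hh η (r, x.1, x.2) : ℂ) *
        (-Complex.sin (k * sdist (r 2) x.2) * (k * ((r 2 / sdist (r 2) x.2 : ℝ) : ℂ))) := by
    rw [← integral_const_mul, ← integral_const_mul, ← integral_add (i1.const_mul _) (i2.const_mul _)]
    congr 1
    ext x
    have x1 : osc (Complex.I * k) (r 2) x.2 = Complex.cos (k * sdist (r 2) x.2) +
        Complex.sin (k * sdist (r 2) x.2) * Complex.I := by
      rw [← Complex.exp_mul_I, osc]; congr 1; ring
    have x2 : osc (-(Complex.I * k)) (r 2) x.2 = Complex.cos (k * sdist (r 2) x.2) -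
        Complex.sin (k * sdist (r 2) x.2) * Complex.I := by
      have := Complex.exp_mul_I (-(k * sdist (r 2) x.2))
      rw [Complex.cos_neg, Complex.sin_neg] at this
      rw [neg_mul (Complex.sin _), ← sub_eq_add_neg] at this
      rw [osc, ← this]; congr 1; ring
    rw [x1, x2]
    simp only [ampP]
    push_cast
    field_simp
    ring
  have hexp : Complex.exp (Complex.I * k * (r 2 : ℂ)) = Complex.cos (k * r 2) +
      Complex.sin (k * r 2) * Complex.I := by
    rw [← Complex.exp_mul_I]; congr 1; ring
  rw [hsum, Phi, d3, hp, hexp]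
  field_simp
  ring

lemma ampP_smooth {η : E2 → ℝ} (hη : ContDiff ℝ ∞ η) (σ : ℝ) : ContDiffOn ℝ ∞ (ampP η σ) UU := by
  unfold ampP
  apply Complex.ofRealCLM.contDiff.comp_contDiffOn
  apply (hh_smooth hη).contDiffOn.mul
  apply contDiffOn_const.add
  apply contDiffOn_const.mul
  have : ContDiff ℝ ∞ (fun x : XX => x.1 2) := by fun_prop
  apply this.contDiffOn.div sdist_smooth
  intro x hx
  exact (sdist_pos _ hx).ne'

theorem stmt9 (η : E2 → ℝ) (hη : ContDiff ℝ (⊤ : ℕ∞) η) (hsupp : HasCompactSupport η)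
    (K : Set E3) (hK : IsCompact K) (δ : ℝ) (hδ : 0 < δ)
    (hone : ∀ r ∈ K, ∀ q : E2, ‖q - proj32 r‖ ≤ 2 * δ → η q = 1) :
    ∀ c₀ > (0:ℝ), ∀ n : ℕ, ∃ C : ℝ, ∀ r ∈ K, ∀ k : ℂ,
      1 ≤ k.re → |k.im| ≤ c₀ →
      ‖Phi η k r - Complex.exp (Complex.I * k * (r 2 : ℂ))‖ ≤ C / k.re ^ n := by
  intro c₀ hc₀ n
  obtain ⟨M1, hM1⟩ := hsupp.isCompact.exists_bound_of_continuousOn (f := fun q : E2 => q)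
    continuousOn_id
  obtain ⟨M2, hM2⟩ := hK.exists_bound_of_continuousOn (f := proj32)
    proj32_smooth.continuous.continuousOn
  set R := |M1| + |M2| + δ + 1 with hRdef
  have hR : δ < R := by
    have := abs_nonneg M1
    have := abs_nonneg M2
    linarith
  have hhigh : ∀ r ∈ K, ∀ θ ρ, R < ρ → η (proj32 r + ρ • om θ) = 0 := by
    intro r hr θ ρ hρ
    by_contra hne
    have a1 := hM1 _ (subset_tsupport _ (Function.mem_support.mpr hne))
    have a2 := hM2 r hr
    have a3 : ‖ρ • om θ‖ = ρ := by
      rw [norm_smul, norm_om, Real.norm_of_nonneg (by linarith), mul_one]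
    have a4 : ‖ρ • om θ‖ ≤ ‖proj32 r + ρ • om θ‖ + ‖proj32 r‖ := by
      simpa using norm_sub_le (proj32 r + ρ • om θ) (proj32 r)
    have := le_abs_self M1
    have := le_abs_self M2
    linarith
  have hamp : ∀ σ, Amp K δ R (ampP η σ) := by
    intro σ
    refine ⟨ampP_smooth hη σ, ?_, ?_⟩
    · intro r hr θ ρ h0 h1
      simp [ampP, hh_low hη (hone r hr) θ h0 h1]
    · intro r hr θ ρ h0
      simp [ampP, hh_high hη (hhigh r hr) θ h0]
  obtain ⟨C1, hC1, hb1⟩ := amp_bound hK hδ hR c₀ n _ (hamp 1)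
  obtain ⟨C2, hC2, hb2⟩ := amp_bound hK hδ hR c₀ n _ (hamp (-1))
  refine ⟨(C1 + C2) / 2, ?_⟩
  intro r hr k hk hki
  have hk0 : k ≠ 0 := by
    rintro rfl
    simp at hk
    linarith
  have hIk : Complex.I * k ≠ 0 := mul_ne_zero Complex.I_ne_zero hk0
  have hpi : -π ≤ π := by linarith [Real.pi_pos]
  rw [Phi_formula hη hsupp hδ hR (hone r hr) (hhigh r hr) k hk0, Measure.volume_eq_prod, 
    setIntegral_prod]
  rotate_left
  · apply ContinuousOn.integrableOn_compact (isCompact_Icc.prod isCompact_Icc)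
    have hc : ∀ σ, ContinuousOn (fun x : ℝ × ℝ => ampP η σ (r, x.1, x.2))
        (Set.Icc (-π) π ×ˢ Set.Icc δ (R + 1)) := fun σ =>
      (ampP_smooth hη σ).continuousOn.comp (by fun_prop) (fun x hx => hδ.trans_le hx.2.1)
    have ho := osc_continuous (Complex.I * k) (r 2)
    have ho' := osc_continuous (-(Complex.I * k)) (r 2)
    exact ((hc 1).mul (ho.comp continuous_snd).continuousOn).add
      ((hc (-1)).mul (ho'.comp continuous_snd).continuousOn)
  have hkn : k.re ≤ ‖k‖ := Complex.re_le_norm k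
  have hkre : 0 < k.re := by linarith
  have inner : ∀ θ ∈ Set.Icc (-π) π, ‖∫ ρ in Set.Icc δ (R + 1),
        (ampP η 1 (r, θ, ρ) * osc (Complex.I * k) (r 2) ρ +
         ampP η (-1) (r, θ, ρ) * osc (-(Complex.I * k)) (r 2) ρ)‖ ≤ (C1 + C2) / k.re ^ n := by
    intro θ hθ
    have ii : ∀ σ w, IntervalIntegrable (fun ρ => ampP η σ (r, θ, ρ) * osc w (r 2) ρ) volume δ (R + 1) :=
      fun σ w => ((slice_cont (ampP_smooth hη σ) r θ hδ).mul
        (osc_continuous w _).continuousOn).intervalIntegrable_of_Icc (by linarith)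
    rw [integral_Icc_eq_integral_Ioc, ← intervalIntegral.integral_of_le (by linarith),
      intervalIntegral.integral_add (ii _ _) (ii _ _)]
    refine (norm_add_le _ _).trans ?_
    have b1 := hb1 r hr θ hθ (Complex.I * k) hIk (by simpa using hki)
    have b2 := hb2 r hr θ hθ (-(Complex.I * k)) (neg_ne_zero.mpr hIk) (by simpa using hki)
    have e1 : ‖Complex.I * k‖ = ‖k‖ := by simp
    rw [e1] at b1
    rw [norm_neg, e1] at b2
    have c1 : C1 / ‖k‖ ^ n ≤ C1 / k.re ^ n := by gcongr
    have c2 : C2 / ‖k‖ ^ n ≤ C2 / k.re ^ n := by gcongr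
    rw [add_div]
    linarith
  have outer := norm_setIntegral_le_of_norm_le_const (μ := volume) (s := Set.Icc (-π) π)
    (by simp) inner
  rw [norm_mul]
  have hv : volume.real (Set.Icc (-π) π) = 2 * π := by
    rw [Real.volume_real_Icc_of_le hpi]; ring
  rw [hv] at outer
  have hn : ‖(1 / (4 * π) : ℂ)‖ = 1 / (4 * π) := by
    simp [abs_of_pos Real.pi_pos]
  rw [hn]
  have hpp := Real.pi_pos
  calc _ ≤ 1 / (4 * π) * ((C1 + C2) / k.re ^ n * (2 * π)) := by gcongr
    _ = (C1 + C2) / 2 / k.re ^ n := by field_simp; ring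

end
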